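/- Let n ≥ 1, let Ω ⊆ ℝ^n be open, and let T : (ℝ^n → ℂ) → ℂ be ℂ-linear. Suppose that for every x ∈ Ω there exists a sequence (f_k^{(x)}) of functions, each smooth on Ω, that represents T on Ω and is asymptotically equicontinuous at x. Then there exists a continuous function g : Ω → ℂ such that g(x) = lim_{k→∞} f_k^{(x)}(x) for every x ∈ Ω and T(φ) = ∫_Ω g φ for every test function φ on Ω. (Sequential form of Loeb's theorem: if a predistribution admits a Robinson value at every point of Ω, the resulting pointwise value function is continuous and represents the predistribution, which is therefore a regular Schwartz distribution.) -/

import Mathlib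

open MeasureTheory Filter Metric Topology

noncomputable section

/-- A test function on an open set `U ⊆ ℝⁿ`: a smooth function `ℝⁿ → ℂ` whose
support is compact and contained in `U`. -/
def IsTestFunction {n : ℕ} (U : Set (EuclideanSpace ℝ (Fin n)))
    (φ : EuclideanSpace ℝ (Fin n) → ℂ) : Prop :=
  ContDiff ℝ (⊤ : ℕ∞) φ ∧ HasCompactSupport φ ∧ tsupport φ ⊆ U

/-- A sequence `f k` of functions represents the linear map `T` on `U` if
`∫_U (f k) φ → T φ` for every test function `φ` on `U`. -/
def Represents {n : ℕ} (U : Set (EuclideanSpace ℝ (Fin n)))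
    (T : (EuclideanSpace ℝ (Fin n) → ℂ) → ℂ)
    (f : ℕ → EuclideanSpace ℝ (Fin n) → ℂ) : Prop :=
  ∀ φ : EuclideanSpace ℝ (Fin n) → ℂ, IsTestFunction U φ →
    Tendsto (fun k => ∫ x in U, f k x * φ x) atTop (𝓝 (T φ))

/-- A sequence `f k` is asymptotically equicontinuous at `x0`: for every `ε > 0` there
is `r > 0` with `B(x0,r) ⊆ U` such that
`limsup_k sup_{x ∈ B(x0,r)} ‖f k x - f k x0‖ ≤ ε`, i.e. eventually in `k` we have
`‖f k x - f k x0‖ ≤ ε` for all `x ∈ B(x0,r)`. -/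
def AsympEquicontAt {n : ℕ} (U : Set (EuclideanSpace ℝ (Fin n)))
    (f : ℕ → EuclideanSpace ℝ (Fin n) → ℂ) (x0 : EuclideanSpace ℝ (Fin n)) : Prop :=
  ∀ ε : ℝ, 0 < ε → ∃ r : ℝ, 0 < r ∧ ball x0 r ⊆ U ∧
    ∀ᶠ k in atTop, ∀ x ∈ ball x0 r, ‖f k x - f k x0‖ ≤ ε

/-- A strict delta sequence: smooth compactly supported `ψ k` with `∫ ψ k = 1`,
`supp ψ k ⊆ B(0, r k)` with `r k → 0`, and `sup_k ∫ ‖ψ k‖ < ∞`. -/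
def StrictDeltaSeq {n : ℕ} (ψ : ℕ → EuclideanSpace ℝ (Fin n) → ℂ) : Prop :=
  (∀ k, ContDiff ℝ (⊤ : ℕ∞) (ψ k) ∧ HasCompactSupport (ψ k)) ∧
  (∀ k, ∫ x, ψ k x = 1) ∧
  (∃ r : ℕ → ℝ, Tendsto r atTop (𝓝 0) ∧
    ∀ k, tsupport (ψ k) ⊆ ball (0 : EuclideanSpace ℝ (Fin n)) (r k)) ∧
  (∃ C : ℝ, ∀ k, (∫ x, ‖ψ k x‖) ≤ C)

/-!
The value of `T` at `x` can be read off from `T` alone: asymptotic equicontinuity at `x` forces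
`T φ = c ∫ φ + o(∫ ‖φ‖)` for test functions `φ` concentrating at `x`, where `c = lim f k x`.
Testing against a normalized bump near `x` shows that such values vary continuously with `x`.
The functional `S φ = T φ - ∫ g φ`, where `g` collects the values of `T`, then has value `0`
everywhere, so each point has a neighbourhood on which `‖S φ‖ ≤ ε ∫ ‖φ‖`. A partition of unity,
for which the norms `‖φ i‖` of the pieces of `φ` add up to `‖φ‖`, spreads this bound to all of `Ω`
with the same `ε`, and hence `S = 0`.
-/

variable {n : ℕ} {Ω U V : Set (EuclideanSpace ℝ (Fin n))} {x : EuclideanSpace ℝ (Fin n)}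
  {φ ψ h : EuclideanSpace ℝ (Fin n) → ℂ}

namespace IsTestFunction

theorem mono (hφ : IsTestFunction U φ) (hUV : U ⊆ V) : IsTestFunction V φ :=
  ⟨hφ.1, hφ.2.1, hφ.2.2.trans hUV⟩

theorem add (hφ : IsTestFunction U φ) (hψ : IsTestFunction U ψ) : IsTestFunction U (φ + ψ) :=
  ⟨hφ.1.add hψ.1, hφ.2.1.add hψ.2.1,
    (tsupport_add φ ψ).trans (Set.union_subset hφ.2.2 hψ.2.2)⟩

theorem ofReal_mul {p : EuclideanSpace ℝ (Fin n) → ℝ} (hp : ContDiff ℝ (⊤ : ℕ∞) p)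
    (hpV : tsupport p ⊆ V) (hφ : IsTestFunction U φ) :
    IsTestFunction (V ∩ U) fun y => (p y : ℂ) * φ y :=
  ⟨(Complex.ofRealCLM.contDiff.comp hp).mul hφ.1, hφ.2.1.mul_left,
    Set.subset_inter
      (tsupport_mul_subset_left.trans ((tsupport_comp_subset Complex.ofReal_zero p).trans hpV))
      (tsupport_mul_subset_right.trans hφ.2.2)⟩

theorem eq_zero_of_notMem (hφ : IsTestFunction U φ) (hx : x ∉ U) : φ x = 0 :=
  image_eq_zero_of_notMem_tsupport fun hxφ => hx (hφ.2.2 hxφ)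

theorem integrable (hφ : IsTestFunction U φ) : Integrable φ :=
  hφ.1.continuous.integrable_of_hasCompactSupport hφ.2.1

theorem integrable_mul (hφ : IsTestFunction U φ) (hh : LocallyIntegrableOn h U) :
    Integrable fun y => h y * φ y := by
  have hint : IntegrableOn (fun y => h y * φ y) (tsupport φ) :=
    (hh.integrableOn_compact_subset hφ.2.2 hφ.2.1).mul_continuousOn
      hφ.1.continuous.continuousOn hφ.2.1
  exact (integrableOn_iff_integrable_of_support_subset
    ((Function.support_mul_subset_right h φ).trans (subset_tsupport φ))).1 hint

theorem setIntegral_mul_eq_integral (hφ : IsTestFunction U φ) (h : EuclideanSpace ℝ (Fin n) → ℂ) :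
    ∫ y in U, h y * φ y = ∫ y, h y * φ y :=
  setIntegral_eq_integral_of_forall_compl_eq_zero fun y hy => by
    rw [hφ.eq_zero_of_notMem hy, mul_zero]

theorem setIntegral_mul_add (hφ : IsTestFunction U φ) (hψ : IsTestFunction U ψ)
    (hh : LocallyIntegrableOn h U) :
    ∫ y in U, h y * (φ + ψ) y = (∫ y in U, h y * φ y) + ∫ y in U, h y * ψ y := by
  simp only [Pi.add_apply, mul_add]
  exact integral_add (hφ.integrable_mul hh).integrableOn (hψ.integrable_mul hh).integrableOn

theorem norm_setIntegral_mul_sub_le (hφ : IsTestFunction U φ) (hUV : U ⊆ V)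
    (hh : LocallyIntegrableOn h U) {c : ℂ} {ε : ℝ} (hε : ∀ y ∈ U, ‖h y - c‖ ≤ ε) :
    ‖(∫ y in V, h y * φ y) - c * ∫ y, φ y‖ ≤ ε * ∫ y, ‖φ y‖ := by
  have hpointwise (y) : ‖h y * φ y - c * φ y‖ ≤ ε * ‖φ y‖ := by
    rw [← sub_mul, norm_mul]
    by_cases hy : y ∈ U
    · exact mul_le_mul_of_nonneg_right (hε y hy) (norm_nonneg _)
    · simp [hφ.eq_zero_of_notMem hy]
  rw [(hφ.mono hUV).setIntegral_mul_eq_integral, ← integral_const_mul,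
    ← integral_sub (hφ.integrable_mul hh) (hφ.integrable.const_mul c), ← integral_const_mul]
  exact norm_integral_le_of_norm_le (hφ.integrable.norm.const_mul ε) (.of_forall hpointwise)

end IsTestFunction

theorem exists_isTestFunction_integral_eq_one (hU : U ∈ 𝓝 x) :
    ∃ φ, IsTestFunction U φ ∧ ∫ y, φ y = 1 ∧ ∫ y, ‖φ y‖ = 1 := by
  obtain ⟨r, hr, hrU⟩ := nhds_basis_closedBall.mem_iff.1 hU
  let b : ContDiffBump x := ⟨r / 2, r, half_pos hr, half_lt_self hr⟩
  have hsupp : tsupport (fun y => (b.normed volume y : ℂ)) ⊆ closedBall x r :=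
    (tsupport_comp_subset Complex.ofReal_zero _).trans b.tsupport_normed_eq.subset
  refine ⟨fun y => (b.normed volume y : ℂ), ⟨?_, ?_, hsupp.trans hrU⟩, ?_, ?_⟩
  · exact Complex.ofRealCLM.contDiff.comp b.contDiff_normed
  · exact (isCompact_closedBall x r).of_isClosed_subset (isClosed_tsupport _) hsupp
  · rw [integral_complex_ofReal, b.integral_normed, Complex.ofReal_one]
  · simp only [Complex.norm_of_nonneg (b.nonneg_normed _)]
    exact b.integral_normed

open scoped Manifold in
theorem exists_finset_contDiff_partition_of_isCompact {E : Type*} [NormedAddCommGroup E]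
    [NormedSpace ℝ E] [FiniteDimensional ℝ E] {K : Set E} (hK : IsCompact K) {U : E → Set E}
    (hU : ∀ x ∈ K, U x ∈ 𝓝 x) :
    ∃ (t : Finset E) (p : t → E → ℝ), (∀ i : t, (i : E) ∈ K) ∧
      (∀ i, ContDiff ℝ (⊤ : ℕ∞) (p i)) ∧ (∀ i, tsupport (p i) ⊆ U i) ∧
      (∀ i x, 0 ≤ p i x) ∧ ∀ x ∈ K, ∑ i, p i x = 1 := by
  obtain ⟨t, htK, hcover⟩ := hK.elim_nhds_subcover (fun x => interior (U x))
    fun x hx => interior_mem_nhds.2 (hU x hx)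
  obtain ⟨p, hp⟩ := SmoothPartitionOfUnity.exists_isSubordinate 𝓘(ℝ, E) hK.isClosed
    (fun i : t => interior (U i)) (fun _ => isOpen_interior)
    (fun x hx => by simpa using hcover hx)
  refine ⟨t, fun i => p i, fun i => htK i i.2, fun i => (p i).contMDiff.contDiff,
    fun i => (hp i).trans interior_subset, p.nonneg, fun x hx => ?_⟩
  rw [← finsum_eq_sum_of_fintype]
  exact p.sum_eq_one hx

theorem IsTestFunction.exists_sum_eq (hφ : IsTestFunction Ω φ)
    {U : EuclideanSpace ℝ (Fin n) → Set (EuclideanSpace ℝ (Fin n))} (hU : ∀ x ∈ Ω, U x ∈ 𝓝 x) :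
    ∃ (t : Finset (EuclideanSpace ℝ (Fin n))) (χ : t → EuclideanSpace ℝ (Fin n) → ℂ),
      (∀ i : t, (i : EuclideanSpace ℝ (Fin n)) ∈ Ω) ∧
      (∀ i : t, IsTestFunction (U i ∩ Ω) (χ i)) ∧
      φ = ∑ i, χ i ∧ ∀ x, ‖φ x‖ = ∑ i, ‖χ i x‖ := by
  obtain ⟨t, p, htφ, hp, hpU, hp_nonneg, hp_sum⟩ :=
    exists_finset_contDiff_partition_of_isCompact hφ.2.1 fun x hx => hU x (hφ.2.2 hx)
  have hsum (x) (hx : φ x ≠ 0) : ∑ i, p i x = 1 := hp_sum x (subset_tsupport φ hx)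
  refine ⟨t, fun i x => (p i x : ℂ) * φ x, fun i => hφ.2.2 (htφ i),
    fun i => hφ.ofReal_mul (hp i) (hpU i), funext fun x => ?_, fun x => ?_⟩
  · rw [Finset.sum_apply, ← Finset.sum_mul, ← Complex.ofReal_sum]
    by_cases hx : φ x = 0
    · rw [hx, mul_zero]
    · rw [hsum x hx, Complex.ofReal_one, one_mul]
  · simp only [norm_mul, Complex.norm_of_nonneg (hp_nonneg _ x), ← Finset.sum_mul]
    by_cases hx : φ x = 0
    · rw [hx, norm_zero, mul_zero]
    · rw [hsum x hx, one_mul]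

theorem IsTestFunction.le_mul_integral_norm_of_locally (hφ : IsTestFunction Ω φ)
    {N : (EuclideanSpace ℝ (Fin n) → ℂ) → ℝ} {C : ℝ} (hN_zero : N 0 ≤ 0)
    (hN_add : ∀ φ ψ, IsTestFunction Ω φ → IsTestFunction Ω ψ → N (φ + ψ) ≤ N φ + N ψ)
    (hN : ∀ x ∈ Ω, ∃ U ∈ 𝓝 x, ∀ φ, IsTestFunction U φ → N φ ≤ C * ∫ y, ‖φ y‖) :
    N φ ≤ C * ∫ y, ‖φ y‖ := by
  choose! U hU hNU using hN
  obtain ⟨t, χ, htΩ, hχ, hφ_sum, hφ_norm⟩ := hφ.exists_sum_eq hU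
  calc N φ = N (∑ i, χ i) := congrArg N hφ_sum
    _ ≤ ∑ i, N (χ i) :=
      Finset.le_sum_of_subadditive_on_pred N (IsTestFunction Ω) hN_zero hN_add
        (fun _ _ => IsTestFunction.add) χ fun i _ => (hχ i).mono Set.inter_subset_right
    _ ≤ ∑ i, C * ∫ y, ‖χ i y‖ :=
      Finset.sum_le_sum fun i _ => hNU i (htΩ i) (χ i) ((hχ i).mono Set.inter_subset_left)
    _ = C * ∫ y, ‖φ y‖ := by
      simp only [hφ_norm]
      rw [integral_finsetSum _ fun i _ => (hχ i).integrable.norm, Finset.mul_sum]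

/-- `T` has the value `c` at `x` if `T φ = c ∫ φ + o(∫ ‖φ‖)` as the support of the test function `φ`
shrinks to `x`. This expresses Robinson's point value through `T` alone, with no reference to a
representing sequence. -/
def HasPointValueAt (T : (EuclideanSpace ℝ (Fin n) → ℂ) → ℂ) (x : EuclideanSpace ℝ (Fin n))
    (c : ℂ) : Prop :=
  ∀ ε : ℝ, 0 < ε → ∃ U ∈ 𝓝 x, ∀ φ, IsTestFunction U φ →
    ‖T φ - c * ∫ y, φ y‖ ≤ ε * ∫ y, ‖φ y‖

variable {S T : (EuclideanSpace ℝ (Fin n) → ℂ) → ℂ} {a c : ℂ}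

namespace HasPointValueAt

theorem sub (hT : HasPointValueAt T x c) (hS : HasPointValueAt S x a) :
    HasPointValueAt (fun φ => T φ - S φ) x (c - a) := fun ε hε => by
  obtain ⟨U, hU, hTU⟩ := hT (ε / 2) (half_pos hε)
  obtain ⟨V, hV, hSV⟩ := hS (ε / 2) (half_pos hε)
  refine ⟨U ∩ V, inter_mem hU hV, fun φ hφ => ?_⟩
  calc ‖T φ - S φ - (c - a) * ∫ y, φ y‖
      = ‖(T φ - c * ∫ y, φ y) - (S φ - a * ∫ y, φ y)‖ := by ring_nf
    _ ≤ ε / 2 * (∫ y, ‖φ y‖) + ε / 2 * ∫ y, ‖φ y‖ :=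
      norm_sub_le_of_le (hTU φ (hφ.mono Set.inter_subset_left))
        (hSV φ (hφ.mono Set.inter_subset_right))
    _ = ε * ∫ y, ‖φ y‖ := by ring

theorem norm_sub_le (hT : HasPointValueAt T x c) (hU : U ∈ 𝓝 x) {ε : ℝ}
    (hTU : ∀ φ, IsTestFunction U φ → ‖T φ - a * ∫ y, φ y‖ ≤ ε * ∫ y, ‖φ y‖) :
    ‖c - a‖ ≤ ε := by
  refine le_of_forall_pos_le_add fun δ hδ => ?_
  obtain ⟨V, hV, hTV⟩ := hT δ hδ
  obtain ⟨φ, hφ, hφ_int, hφ_norm⟩ := exists_isTestFunction_integral_eq_one (inter_mem hU hV)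
  have hTa := hTU φ (hφ.mono Set.inter_subset_left)
  have hTc := hTV φ (hφ.mono Set.inter_subset_right)
  rw [hφ_int, hφ_norm, mul_one, mul_one] at hTa hTc
  calc ‖c - a‖ = ‖(T φ - a) - (T φ - c)‖ := by rw [sub_sub_sub_cancel_left]
    _ ≤ ε + δ := norm_sub_le_of_le hTa hTc

end HasPointValueAt

theorem continuousOn_of_hasPointValueAt {g : EuclideanSpace ℝ (Fin n) → ℂ}
    (hg : ∀ x ∈ Ω, HasPointValueAt T x (g x)) : ContinuousOn g Ω := by
  intro x hx
  refine Metric.tendsto_nhds.2 fun ε hε => ?_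
  obtain ⟨U, hU, hTU⟩ := hg x hx (ε / 2) (half_pos hε)
  filter_upwards [self_mem_nhdsWithin, mem_nhdsWithin_of_mem_nhds (eventually_mem_nhds_iff.2 hU)]
    with y hyΩ hyU
  rw [dist_eq_norm]
  exact ((hg y hyΩ).norm_sub_le hyU hTU).trans_lt (half_lt_self hε)

theorem hasPointValueAt_setIntegral_mul (hΩ : Ω ∈ 𝓝 x) (hh : LocallyIntegrableOn h Ω)
    (hx : ContinuousAt h x) : HasPointValueAt (fun φ => ∫ y in Ω, h y * φ y) x (h x) :=
  fun ε hε => by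
  have hclose : h ⁻¹' closedBall (h x) ε ∈ 𝓝 x := hx (closedBall_mem_nhds (h x) hε)
  exact ⟨Ω ∩ h ⁻¹' closedBall (h x) ε, inter_mem hΩ hclose, fun φ hφ =>
    hφ.norm_setIntegral_mul_sub_le Set.inter_subset_left (hh.mono_set Set.inter_subset_left)
      fun y hy => mem_closedBall_iff_norm.1 hy.2⟩

theorem IsTestFunction.eq_zero_of_hasPointValueAt_zero (hφ : IsTestFunction Ω φ)
    (hS_zero : S 0 = 0)
    (hS_add : ∀ φ ψ, IsTestFunction Ω φ → IsTestFunction Ω ψ → S (φ + ψ) = S φ + S ψ)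
    (hS : ∀ x ∈ Ω, HasPointValueAt S x 0) : S φ = 0 := by
  have hbound (ε : ℝ) (hε : 0 < ε) : ‖S φ‖ ≤ ε * ∫ y, ‖φ y‖ := by
    refine hφ.le_mul_integral_norm_of_locally (N := fun φ => ‖S φ‖) ?_ ?_ fun x hx => ?_
    · rw [hS_zero, norm_zero]
    · exact fun φ ψ hφ hψ => (hS_add φ ψ hφ hψ).symm ▸ norm_add_le _ _
    · simpa only [zero_mul, sub_zero] using hS x hx ε hε
  have hlim : Tendsto (fun ε : ℝ => ε * ∫ y, ‖φ y‖) (𝓝[>] 0) (𝓝 0) :=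
    ((continuous_mul_const _).tendsto' 0 0 (zero_mul _)).mono_left nhdsWithin_le_nhds
  exact norm_le_zero_iff.1 (ge_of_tendsto hlim (eventually_mem_nhdsWithin.mono hbound))

theorem IsTestFunction.eq_setIntegral_mul_of_hasPointValueAt (hφ : IsTestFunction Ω φ)
    (hΩ : IsOpen Ω) (hT_zero : T 0 = 0)
    (hT_add : ∀ φ ψ, IsTestFunction Ω φ → IsTestFunction Ω ψ → T (φ + ψ) = T φ + T ψ)
    {g : EuclideanSpace ℝ (Fin n) → ℂ} (hg : ∀ x ∈ Ω, HasPointValueAt T x (g x)) :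
    T φ = ∫ y in Ω, g y * φ y := by
  have hcont : ContinuousOn g Ω := continuousOn_of_hasPointValueAt hg
  have hint : LocallyIntegrableOn g Ω := hcont.locallyIntegrableOn hΩ.measurableSet
  refine sub_eq_zero.1 (hφ.eq_zero_of_hasPointValueAt_zero
    (S := fun φ => T φ - ∫ y in Ω, g y * φ y) ?_ (fun φ ψ hφ hψ => ?_) fun x hx => ?_)
  · simp [hT_zero]
  · rw [hT_add φ ψ hφ hψ, hφ.setIntegral_mul_add hψ hint, add_sub_add_comm]
  · simpa only [sub_self] using (hg x hx).sub
      (hasPointValueAt_setIntegral_mul (hΩ.mem_nhds hx) hint (hcont.continuousAt (hΩ.mem_nhds hx)))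

namespace AsympEquicontAt

variable {f : ℕ → EuclideanSpace ℝ (Fin n) → ℂ}

theorem mem_nhds (hf : AsympEquicontAt Ω f x) : Ω ∈ 𝓝 x := by
  obtain ⟨r, hr, hrΩ, -⟩ := hf 1 one_pos
  exact mem_of_superset (ball_mem_nhds x hr) hrΩ

theorem exists_eventually_norm_setIntegral_mul_sub_le (hf : AsympEquicontAt Ω f x)
    (hint : ∀ k, LocallyIntegrableOn (f k) Ω) {ε : ℝ} (hε : 0 < ε) :
    ∃ U ∈ 𝓝 x, U ⊆ Ω ∧ ∀ φ, IsTestFunction U φ → ∀ᶠ k in atTop,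
      ‖(∫ y in Ω, f k y * φ y) - f k x * ∫ y, φ y‖ ≤ ε * ∫ y, ‖φ y‖ := by
  obtain ⟨r, hr, hrΩ, hfr⟩ := hf ε hε
  exact ⟨ball x r, ball_mem_nhds x hr, hrΩ, fun φ hφ => hfr.mono fun k hk =>
    hφ.norm_setIntegral_mul_sub_le hrΩ ((hint k).mono_set hrΩ) hk⟩

theorem cauchySeq (hf : AsympEquicontAt Ω f x) (hint : ∀ k, LocallyIntegrableOn (f k) Ω)
    (hT : Represents Ω T f) : CauchySeq fun k => f k x := by
  refine Metric.cauchySeq_iff'.2 fun ε hε => ?_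
  obtain ⟨U, hU, hUΩ, hfU⟩ :=
    hf.exists_eventually_norm_setIntegral_mul_sub_le hint (ε := ε / 4) (by positivity)
  obtain ⟨φ, hφ, hφ_int, hφ_norm⟩ := exists_isTestFunction_integral_eq_one hU
  have hnear : ∀ᶠ k in atTop, dist (f k x) (T φ) < ε / 2 := by
    filter_upwards [hfU φ hφ,
      Metric.tendsto_nhds.1 (hT φ (hφ.mono hUΩ)) (ε / 4) (by positivity)] with k hfk hTk
    rw [hφ_int, hφ_norm, mul_one, mul_one, ← dist_eq_norm, dist_comm] at hfk
    linarith [dist_triangle (f k x) (∫ y in Ω, f k y * φ y) (T φ)]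
  obtain ⟨K, hK⟩ := eventually_atTop.1 hnear
  refine ⟨K, fun k hk => ?_⟩
  linarith [hK k hk, hK K le_rfl, dist_triangle_right (f k x) (f K x) (T φ)]

theorem hasPointValueAt (hf : AsympEquicontAt Ω f x) (hint : ∀ k, LocallyIntegrableOn (f k) Ω)
    (hT : Represents Ω T f) (hc : Tendsto (fun k => f k x) atTop (𝓝 c)) :
    HasPointValueAt T x c := fun ε hε => by
  obtain ⟨U, hU, hUΩ, hfU⟩ := hf.exists_eventually_norm_setIntegral_mul_sub_le hint hε
  exact ⟨U, hU, fun φ hφ => le_of_tendsto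
    ((hT φ (hφ.mono hUΩ)).sub (hc.mul_const (∫ y, φ y))).norm (hfU φ hφ)⟩

end AsympEquicontAt

theorem loeb_everywhere_point_values_general (hT : IsLinearMap ℂ T)
    {F : EuclideanSpace ℝ (Fin n) → ℕ → EuclideanSpace ℝ (Fin n) → ℂ}
    (hF : ∀ x ∈ Ω, (∀ k, LocallyIntegrableOn (F x k) Ω) ∧
      Represents Ω T (F x) ∧ AsympEquicontAt Ω (F x) x) :
    ∃ g : EuclideanSpace ℝ (Fin n) → ℂ, ContinuousOn g Ω ∧
      (∀ x ∈ Ω, Tendsto (fun k => F x k x) atTop (𝓝 (g x))) ∧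
      (∀ φ : EuclideanSpace ℝ (Fin n) → ℂ, IsTestFunction Ω φ →
        T φ = ∫ x in Ω, g x * φ x) := by
  choose hint hrep hequi using hF
  have hΩ : IsOpen Ω := isOpen_iff_mem_nhds.2 fun x hx => (hequi x hx).mem_nhds
  have hlim (x) (hx : x ∈ Ω) : ∃ c, Tendsto (fun k => F x k x) atTop (𝓝 c) :=
    cauchySeq_tendsto_of_complete ((hequi x hx).cauchySeq (hint x hx) (hrep x hx))
  choose! g hg using hlim
  have hvalue (x) (hx : x ∈ Ω) : HasPointValueAt T x (g x) :=
    (hequi x hx).hasPointValueAt (hint x hx) (hrep x hx) (hg x hx)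
  exact ⟨g, continuousOn_of_hasPointValueAt hvalue, hg, fun φ hφ =>
    hφ.eq_setIntegral_mul_of_hasPointValueAt hΩ hT.map_zero (fun φ ψ _ _ => hT.map_add φ ψ) hvalue⟩

/-- Sequential form of Loeb's theorem: if for every `x ∈ Ω` the predistribution `T`
admits a representing sequence `F x` asymptotically equicontinuous at `x`, then the
pointwise value function `g x = lim_k (F x) k x` is continuous on `Ω` and represents
`T`, which is therefore a regular Schwartz distribution. -/
theorem loeb_everywhere_point_values {n : ℕ} (hn : 1 ≤ n)
    (Ω : Set (EuclideanSpace ℝ (Fin n))) (hΩ : IsOpen Ω)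
    (T : (EuclideanSpace ℝ (Fin n) → ℂ) → ℂ) (hT : IsLinearMap ℂ T)
    (F : EuclideanSpace ℝ (Fin n) → ℕ → EuclideanSpace ℝ (Fin n) → ℂ)
    (hF : ∀ x ∈ Ω, (∀ k, ContDiffOn ℝ (⊤ : ℕ∞) (F x k) Ω) ∧
      Represents Ω T (F x) ∧ AsympEquicontAt Ω (F x) x) :
    ∃ g : EuclideanSpace ℝ (Fin n) → ℂ, ContinuousOn g Ω ∧
      (∀ x ∈ Ω, Tendsto (fun k => F x k x) atTop (𝓝 (g x))) ∧
      (∀ φ : EuclideanSpace ℝ (Fin n) → ℂ, IsTestFunction Ω φ →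
        T φ = ∫ x in Ω, g x * φ x) := by
  refine loeb_everywhere_point_values_general hT fun x hx => ?_
  obtain ⟨hsmooth, hrep, hequi⟩ := hF x hx
  exact ⟨fun k => (hsmooth k).continuousOn.locallyIntegrableOn hΩ.measurableSet, hrep, hequi⟩
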